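/- arXiv:2304.04566 — 2 statements merged into one kernel-verified Lean document; each statement's English description precedes it below -/
import Mathlib

section
/- Let (Ω, μ) be a probability space, let T : Ω → Bool be measurable, let N : Ω → γ be measurable and independent of T, let f : Bool → γ → ℝ be measurable with ω ↦ f(T(ω))(N(ω)) integrable and both ω ↦ f(true)(N(ω)) and ω ↦ f(false)(N(ω)) integrable, and set Y(ω) = f(T(ω))(N(ω)). If μ{T = true} > 0 and μ{T = false} > 0, then the average treatment effect ∫ f(true)(N(ω)) dμ − ∫ f(false)(N(ω)) dμ equals the difference of conditional expectations E[Y | T = true] − E[Y | T = false] (conditional expectation with respect to the conditional measures μ[·|{T = true}] and μ[·|{T = false}]). (Identification of the ATE when the treatment is independent of the outcome noise, i.e., when there is no confounding.) -/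
/-!
Each interventional mean `E[f b N]` is identified separately: on the event `T = b` the outcome
`Y` agrees with `f b N`, and since that event is independent of `N`, the integral of `f b N` over
it is `μ {T = b} * E[f b N]`. Dividing by `μ {T = b} > 0` gives `E[Y | T = b] = E[f b N]`
(`integral_cond_outcome`), and the effect is the difference of the cases `b = true`, `b = false`.
-/

open MeasureTheory ProbabilityTheory

/-- On the event `T = b` the outcome is `f b N`, and independence makes the average of `f b N`
over that event equal to its unconditional mean. -/
lemma integral_cond_outcome {Ω γ : Type*} [MeasurableSpace Ω] [MeasurableSpace γ]
    (μ : Measure Ω) [IsProbabilityMeasure μ]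
    (T : Ω → Bool) (N : Ω → γ) (hT : Measurable T) (hN : Measurable N)
    (hindep : IndepFun T N μ)
    (f : Bool → γ → ℝ) (hf : Measurable fun p : Bool × γ => f p.1 p.2)
    (Y : Ω → ℝ) (hY : ∀ ω, Y ω = f (T ω) (N ω)) (b : Bool)
    (hb : 0 < μ {ω | T ω = b}) :
    ∫ ω, Y ω ∂(ProbabilityTheory.cond μ {ω | T ω = b}) = ∫ ω, f b (N ω) ∂μ := by
  have hfb : Measurable (f b) := hf.comp measurable_prodMk_left
  have hms : MeasurableSet {ω | T ω = b} := hT (measurableSet_singleton b)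
  have hset : ∫ ω in {ω | T ω = b}, Y ω ∂μ = ∫ ω in {ω | T ω = b}, f b (N ω) ∂μ :=
    setIntegral_congr_fun hms fun ω (hω : T ω = b) => by simp only [hY, hω]
  have hmul : ∫ ω in {ω | T ω = b}, f b (N ω) ∂μ
      = μ.real {ω | T ω = b} * ∫ ω, f b (N ω) ∂μ :=
    Indep.setIntegral_eq_mul hT.comap_le hindep hN.aemeasurable
      ⟨{b}, measurableSet_singleton b, rfl⟩ hfb.aestronglyMeasurable
  have hne : μ.real {ω | T ω = b} ≠ 0 :=
    (ENNReal.toReal_pos hb.ne' (measure_ne_top μ _)).ne'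
  rw [ProbabilityTheory.cond, integral_smul_measure, hset, hmul, ENNReal.toReal_inv, smul_eq_mul]
  exact inv_mul_cancel_left₀ hne _

/-- Identification of the ATE without confounding: for an outcome
`Y = f(T, N)` with treatment `T` independent of the noise `N`, the average
treatment effect `E[f(true, N)] − E[f(false, N)]` equals the difference of the
conditional expectations `E[Y | T = true] − E[Y | T = false]`. -/
theorem stmt_9 {Ω γ : Type*} [MeasurableSpace Ω] [MeasurableSpace γ]
    (μ : Measure Ω) [IsProbabilityMeasure μ]
    (T : Ω → Bool) (N : Ω → γ) (hT : Measurable T) (hN : Measurable N)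
    (hindep : IndepFun T N μ)
    (f : Bool → γ → ℝ) (hf : Measurable fun p : Bool × γ => f p.1 p.2)
    (Y : Ω → ℝ) (hY : ∀ ω, Y ω = f (T ω) (N ω))
    (hYint : Integrable Y μ)
    (hint_true : Integrable (fun ω => f true (N ω)) μ)
    (hint_false : Integrable (fun ω => f false (N ω)) μ)
    (htrue : 0 < μ {ω | T ω = true}) (hfalse : 0 < μ {ω | T ω = false}) :
    (∫ ω, f true (N ω) ∂μ) - (∫ ω, f false (N ω) ∂μ)
      = (∫ ω, Y ω ∂(ProbabilityTheory.cond μ {ω | T ω = true}))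
        - (∫ ω, Y ω ∂(ProbabilityTheory.cond μ {ω | T ω = false})) := by
  rw [integral_cond_outcome μ T N hT hN hindep f hf Y hY true htrue,
    integral_cond_outcome μ T N hT hN hindep f hf Y hY false hfalse]
end

section
/- Let (Ω, μ) be a probability space, let α be a finite measurable space with measurable singletons, and let X : Ω → α, T : Ω → Bool, N : Ω → γ be measurable random variables with N independent of the pair (T, X). Let the outcome be Y(ω) = f(T(ω))(X(ω))(N(ω)) for measurable f : Bool → α → γ → β. Assume μ{T = t, X = x} > 0 for the fixed treatment value t ∈ Bool and all x ∈ α. Then for every measurable B ⊆ β, the interventional probability μ{ω | f(t)(X(ω))(N(ω)) ∈ B} equals the back-door adjustment sum ∑_{x ∈ α} μ[{Y ∈ B} | {T = t, X = x}] · μ{X = x}. (Back-door adjustment: the effect of intervening do(T = t) on an outcome whose direct causes are T and the observed confounder X is identified from observational conditional probabilities by adjusting for X.) -/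
/-!
Partition by the value of `X`. On `{X = x}` the interventional event is `{f t x N ∈ B}`, which
is independent of `X`, so it contributes `μ {f t x N ∈ B} * μ {X = x}`. On `{T = t, X = x}` the
observed event `{Y ∈ B}` is the same event `{f t x N ∈ B}`, which is independent of `(T, X)`, so
by positivity of the conditioning event its conditional probability is `μ {f t x N ∈ B}` too.
-/

open MeasureTheory ProbabilityTheory

/-- Back-door adjustment: for an outcome `Y = f(T, X, N)` whose direct causes
are the treatment `T` and the observed confounder `X`, with exogenous noise
`N` independent of `(T, X)`, the interventional probability under `do(T = t)`
is identified from observational conditional probabilities by adjusting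
for `X`. -/
theorem stmt_11 {Ω α γ β : Type*} [MeasurableSpace Ω] [MeasurableSpace α]
    [Fintype α] [MeasurableSingletonClass α]
    [MeasurableSpace γ] [MeasurableSpace β]
    (μ : Measure Ω) [IsProbabilityMeasure μ]
    (X : Ω → α) (T : Ω → Bool) (N : Ω → γ)
    (hX : Measurable X) (hT : Measurable T) (hN : Measurable N)
    (hindep : IndepFun (fun ω => (T ω, X ω)) N μ)
    (f : Bool → α → γ → β)
    (hf : Measurable fun q : Bool × α × γ => f q.1 q.2.1 q.2.2)
    (Y : Ω → β) (hY : ∀ ω, Y ω = f (T ω) (X ω) (N ω))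
    (t : Bool) (hpos : ∀ x : α, 0 < μ {ω | T ω = t ∧ X ω = x})
    (B : Set β) (hB : MeasurableSet B) :
    μ {ω | f t (X ω) (N ω) ∈ B}
      = ∑ x : α, ProbabilityTheory.cond μ {ω | T ω = t ∧ X ω = x} {ω | Y ω ∈ B}
          * μ {ω | X ω = x} := by
  have hS : ∀ x, MeasurableSet {n | f t x n ∈ B} := fun x =>
    (hf.comp (by fun_prop : Measurable fun n : γ => (t, x, n))) hB
  have hTX : ∀ x, MeasurableSet {ω | T ω = t ∧ X ω = x} := fun x =>
    (hT (measurableSet_singleton t)).inter (hX (measurableSet_singleton x))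
  have hXN : IndepFun X N μ := hindep.comp measurable_snd measurable_id
  have hcond : ∀ x, ProbabilityTheory.cond μ {ω | T ω = t ∧ X ω = x} {ω | Y ω ∈ B}
      = μ (N ⁻¹' {n | f t x n ∈ B}) := by
    intro x
    have hset : {ω | T ω = t ∧ X ω = x} ∩ {ω | Y ω ∈ B}
        = (fun ω => (T ω, X ω)) ⁻¹' {(t, x)} ∩ N ⁻¹' {n | f t x n ∈ B} := by
      ext ω
      simp only [Set.mem_inter_iff, Set.mem_setOf_eq, Set.mem_preimage, Set.mem_singleton_iff,
        Prod.mk.injEq, hY]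
      constructor <;> rintro ⟨⟨rfl, rfl⟩, h⟩ <;> exact ⟨⟨rfl, rfl⟩, h⟩
    have hpre : (fun ω => (T ω, X ω)) ⁻¹' {(t, x)} = {ω | T ω = t ∧ X ω = x} := by
      ext ω
      simp
    rw [cond_apply (hTX x), hset, hindep.measure_inter_preimage_eq_mul _ _
      (measurableSet_singleton _) (hS x), hpre, ← mul_assoc,
      ENNReal.inv_mul_cancel (hpos x).ne' (measure_ne_top _ _), one_mul]
  have hunion : {ω | f t (X ω) (N ω) ∈ B}
      = ⋃ x : α, X ⁻¹' {x} ∩ N ⁻¹' {n | f t x n ∈ B} := by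
    ext ω
    simp
  rw [hunion, measure_iUnion, tsum_fintype]
  · refine Finset.sum_congr rfl fun x _ => ?_
    rw [hXN.measure_inter_preimage_eq_mul _ _ (measurableSet_singleton _) (hS x), hcond, mul_comm]
    rfl
  · intro x y hxy
    exact ((Set.disjoint_singleton.2 hxy).preimage X).mono
      Set.inter_subset_left Set.inter_subset_left
  · exact fun x => (hX (measurableSet_singleton x)).inter (hN (hS x))
end
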